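/- Let n ≥ 2 and let x_1, …, x_n be real numbers with at least two distinct values, and define S_Ψ(λ), S_{Ψ²}(λ), S_{∂Ψ}(λ), S_{∂Ψ²}(λ), S_φ and NLL as before. Then for every λ ∈ ℝ, the sign of NLL′(λ) equals the sign of the division-free expression n·S_{∂Ψ²}(λ) − 2·S_Ψ(λ)·S_{∂Ψ}(λ) − 2·S_φ·(S_{Ψ²}(λ) − S_Ψ(λ)²/n). -/

import Mathlib

open scoped BigOperators

/-- The Yeo-Johnson transformation. -/
noncomputable def yj (l x : ℝ) : ℝ :=
  if 0 ≤ x then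
    if l ≠ 0 then ((x + 1) ^ l - 1) / l else Real.log (x + 1)
  else
    if l ≠ 2 then -(((1 - x) ^ (2 - l) - 1) / (2 - l)) else -Real.log (1 - x)

/-- The partial derivative of the Yeo-Johnson transformation with respect to `λ`. -/
noncomputable def yjDeriv (l x : ℝ) : ℝ := deriv (fun t => yj t x) l

/-- The Box-Cox function is a divided slope. -/
lemma bc_eq_dslope (c : ℝ) (hc : 0 < c) (t : ℝ) :
    (if t ≠ 0 then (c ^ t - 1) / t else Real.log c) = dslope (fun s : ℝ => c ^ s) 0 t := by
  by_cases ht : t = 0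
  · subst ht
    rw [dslope_same, (Real.hasStrictDerivAt_const_rpow hc 0).hasDerivAt.deriv]
    simp
  · rw [dslope_of_ne _ ht, slope_def_field]
    simp [ht]

lemma bc_diff (c : ℝ) (hc : 0 < c) (t : ℝ) :
    DifferentiableAt ℝ (fun t : ℝ => if t ≠ 0 then (c ^ t - 1) / t else Real.log c) t := by
  have h : (fun t : ℝ => if t ≠ 0 then (c ^ t - 1) / t else Real.log c)
      = dslope (fun s : ℝ => c ^ s) 0 := funext (bc_eq_dslope c hc)
  rw [h]
  by_cases ht : t = 0
  · subst ht
    have ha : AnalyticAt ℝ (fun s : ℝ => c ^ s) 0 := by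
      have : (fun s : ℝ => c ^ s) = fun s : ℝ => Real.exp (Real.log c * s) :=
        funext fun s => Real.rpow_def_of_pos hc s
      rw [this]
      fun_prop
    obtain ⟨p, hp⟩ := ha
    exact hp.has_fpower_series_dslope_fslope.analyticAt.differentiableAt
  · rw [differentiableAt_dslope_of_ne ht]
    exact (Real.hasStrictDerivAt_const_rpow hc t).hasDerivAt.differentiableAt

lemma bc_lt (a b : ℝ) (ha : 0 < a) (hab : a < b) (t : ℝ) :
    (if t ≠ 0 then (a ^ t - 1) / t else Real.log a)
      < (if t ≠ 0 then (b ^ t - 1) / t else Real.log b) := by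
  rcases lt_trichotomy t 0 with h | h | h
  · rw [if_pos h.ne, if_pos h.ne]
    have := Real.rpow_lt_rpow_of_neg ha hab h
    exact div_lt_div_of_neg_of_lt h (by linarith)
  · subst h
    simpa using Real.log_lt_log ha hab
  · rw [if_pos h.ne', if_pos h.ne']
    have := Real.rpow_lt_rpow ha.le hab h
    gcongr

lemma bc_one (t : ℝ) : (if t ≠ 0 then ((1 : ℝ) ^ t - 1) / t else Real.log 1) = 0 := by
  simp

lemma yj_nonneg_eq (l x : ℝ) (hx : 0 ≤ x) :
    yj l x = if l ≠ 0 then ((x + 1) ^ l - 1) / l else Real.log (x + 1) := by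
  rw [yj, if_pos hx]

lemma yj_neg_eq (l x : ℝ) (hx : x < 0) :
    yj l x = -(if 2 - l ≠ 0 then ((1 - x) ^ (2 - l) - 1) / (2 - l) else Real.log (1 - x)) := by
  rw [yj, if_neg hx.not_ge]
  by_cases h : l = 2
  · subst h; simp
  · have : 2 - l ≠ 0 := fun h' => h (by linarith)
    rw [if_pos h, if_pos this]

lemma yj_diff (l x : ℝ) : DifferentiableAt ℝ (fun t => yj t x) l := by
  rcases le_or_gt 0 x with hx | hx
  · rw [funext fun t => yj_nonneg_eq t x hx]
    exact bc_diff (x + 1) (by linarith) l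
  · rw [funext fun t => yj_neg_eq t x hx]
    have h := bc_diff (1 - x) (by linarith) (2 - l)
    exact (DifferentiableAt.comp (f := fun t : ℝ => 2 - t) l h (by fun_prop)).neg

lemma yj_hasDerivAt (l x : ℝ) : HasDerivAt (fun t => yj t x) (yjDeriv l x) l :=
  (yj_diff l x).hasDerivAt

lemma yj_strictMono (l : ℝ) : StrictMono (yj l) := by
  intro a b hab
  rcases le_or_gt 0 a with ha | ha
  · rw [yj_nonneg_eq l a ha, yj_nonneg_eq l b (by linarith)]
    exact bc_lt _ _ (by linarith) (by linarith) l
  · rcases le_or_gt 0 b with hb | hb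
    · have h1 : yj l a < 0 := by
        rw [yj_neg_eq l a ha]
        have := bc_lt 1 (1 - a) one_pos (by linarith) (2 - l)
        rw [bc_one] at this
        linarith
      have h2 : 0 ≤ yj l b := by
        rw [yj_nonneg_eq l b hb]
        rcases hb.eq_or_lt with rfl | hb'
        · simp
        · have := bc_lt 1 (b + 1) one_pos (by linarith) l
          rw [bc_one] at this
          exact this.le
      linarith
    · rw [yj_neg_eq l a ha, yj_neg_eq l b hb]
      exact neg_lt_neg (bc_lt _ _ (by linarith) (by linarith) (2 - l))

lemma var_pos (n : ℕ) (hn : 0 < n) (y : Fin n → ℝ) (h : ∃ i j, y i ≠ y j) :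
    0 < (∑ i, y i ^ 2) / n - ((∑ i, y i) / n) ^ 2 := by
  have hn' : (0 : ℝ) < n := by exact_mod_cast hn
  set m := (∑ i, y i) / n with hm
  have hs : ∑ i, y i = n * m := by rw [hm]; field_simp
  have h1 : ∑ i, (y i - m) ^ 2 = ∑ i, y i ^ 2 - n * m ^ 2 := by
    have : ∀ i, (y i - m) ^ 2 = y i ^ 2 - 2 * m * y i + m ^ 2 := fun i => by ring
    simp only [this, Finset.sum_add_distrib, Finset.sum_sub_distrib, ← Finset.mul_sum, hs]
    simp
    ring
  have h2 : 0 < ∑ i, (y i - m) ^ 2 := by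
    obtain ⟨i, j, hij⟩ := h
    have : ∃ k, y k ≠ m := by
      by_contra! hc
      exact hij ((hc i).trans (hc j).symm)
    obtain ⟨k, hk⟩ := this
    exact Finset.sum_pos' (fun _ _ => sq_nonneg _)
      ⟨k, Finset.mem_univ _, by have := sub_ne_zero.2 hk; positivity⟩
  have h3 : (∑ i, y i ^ 2) / n - m ^ 2 = (∑ i, (y i - m) ^ 2) / n := by
    rw [h1]; field_simp
  rw [h3]
  positivity

lemma sign_mul_pos (a b : ℝ) (hb : 0 < b) : Real.sign a = Real.sign (a * b) := by
  rcases lt_trichotomy a 0 with h | h | h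
  · rw [Real.sign_of_neg h, Real.sign_of_neg (mul_neg_of_neg_of_pos h hb)]
  · simp [h]
  · rw [Real.sign_of_pos h, Real.sign_of_pos (mul_pos h hb)]

/-- The sign of the derivative of the Yeo-Johnson negative log-likelihood equals the
sign of the division-free expression
`n·S_{∂Ψ²} − 2·S_Ψ·S_{∂Ψ} − 2·S_φ·(S_{Ψ²} − S_Ψ²/n)`. -/
theorem yj_nll_deriv_sign (n : ℕ) (hn : 2 ≤ n) (x : Fin n → ℝ)
    (hdist : ∃ i j, x i ≠ x j) (l : ℝ) :
    Real.sign (deriv (fun t : ℝ =>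
        (n / 2 : ℝ) *
            Real.log ((∑ i, yj t (x i) ^ 2) / n - ((∑ i, yj t (x i)) / n) ^ 2)
          - (t - 1) * ∑ i, Real.sign (x i) * Real.log (|x i| + 1)
          + (n / 2 : ℝ) * Real.log (2 * Real.pi)) l) =
      Real.sign ((n : ℝ) * (∑ i, 2 * yj l (x i) * yjDeriv l (x i))
        - 2 * (∑ i, yj l (x i)) * (∑ i, yjDeriv l (x i))
        - 2 * (∑ i, Real.sign (x i) * Real.log (|x i| + 1)) *
            ((∑ i, yj l (x i) ^ 2) - (∑ i, yj l (x i)) ^ 2 / n)) := by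
  have hn0 : 0 < n := by omega
  have hn' : (0 : ℝ) < n := by exact_mod_cast hn0
  have hv := var_pos n hn0 (fun i => yj l (x i)) (by
    obtain ⟨i, j, hij⟩ := hdist
    exact ⟨i, j, fun h => hij ((yj_strictMono l).injective h)⟩)
  have hS : HasDerivAt (fun t => ∑ i, yj t (x i)) (∑ i, yjDeriv l (x i)) l :=
    HasDerivAt.fun_sum fun i _ => yj_hasDerivAt l (x i)
  have hS2 : HasDerivAt (fun t => ∑ i, yj t (x i) ^ 2)
      (∑ i, 2 * yj l (x i) * yjDeriv l (x i)) l :=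
    HasDerivAt.fun_sum fun i _ => by simpa using (yj_hasDerivAt l (x i)).fun_pow 2
  have hV := (hS2.div_const (n : ℝ)).fun_sub ((hS.div_const (n : ℝ)).fun_pow 2)
  have hN := (((hV.log hv.ne').const_mul (n / 2 : ℝ)).fun_sub
    (((hasDerivAt_id' l).sub_const 1).mul_const
      (∑ i, Real.sign (x i) * Real.log (|x i| + 1)))).add_const
        ((n / 2 : ℝ) * Real.log (2 * Real.pi))
  rw [hN.deriv, sign_mul_pos _ _ (mul_pos (mul_pos two_pos hn') hv)]
  congr 1
  generalize (∑ i, 2 * yj l (x i) * yjDeriv l (x i)) = A at *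
  generalize (∑ i, Real.sign (x i) * Real.log (|x i| + 1)) = B at *
  generalize (∑ i, yjDeriv l (x i)) = C at *
  generalize hW : (∑ i, yj l (x i) ^ 2) / (n : ℝ) - ((∑ i, yj l (x i)) / n) ^ 2 = W at *
  have e : (∑ i, yj l (x i) ^ 2) - (∑ i, yj l (x i)) ^ 2 / n = n * W := by
    rw [← hW]; field_simp
  rw [e]
  have hW0 := hv.ne'
  push_cast
  field_simp
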